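/- Let R be a commutative noetherian local ring with residue field k, and let M and N be objects of the derived category D(R). Suppose M is bounded below with finitely generated homology in each degree, N is a perfect complex which is nonzero in D(R), and the derived tensor product M ⊗^L_R N is a perfect complex. Then M is a perfect complex. -/

import Mathlib

open CategoryTheory Limits MonoidalCategory

variable (R : Type) [CommRing R]

instance : (curriedTensor (ModuleCat R)).Additive where
  map_add := by intros; ext x; simp [curriedTensor, MonoidalPreadditive.add_whiskerRight]

/-- A cochain complex of `R`-modules is *perfect* if it is quasi-isomorphic to
(hence isomorphic in `D(R)` to) a bounded complex of finitely generated projective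
modules. -/
def IsPerfect (M : CochainComplex (ModuleCat R) ℤ) : Prop :=
  ∃ (P : CochainComplex (ModuleCat R) ℤ) (f : P ⟶ M), QuasiIso f ∧
    (∃ a b : ℤ, ∀ i : ℤ, (i < a ∨ b < i) → IsZero (P.X i)) ∧
    (∀ i : ℤ, Module.Finite R (P.X i) ∧ Module.Projective R (P.X i))

/-- `f : P ⟶ M` is a projective resolution: a quasi-isomorphism from a bounded-above
(i.e. homologically bounded-below) complex of projective modules.  Such a complex is
K-projective, so it computes derived tensor products. -/
def IsProjRes {M P : CochainComplex (ModuleCat R) ℤ} (f : P ⟶ M) : Prop :=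
  QuasiIso f ∧ (∃ b : ℤ, ∀ i : ℤ, b < i → IsZero (P.X i)) ∧
    ∀ i : ℤ, Module.Projective R (P.X i)

namespace DerivedCategory

section Single

universe w v u

variable {C : Type u} [Category.{v} C] [Abelian C]

lemma exists_single_hom (K : CochainComplex C ℤ) {A : C} [Projective A] (n : ℤ)
    (π : A ⟶ K.homology n) :
    ∃ g : (HomologicalComplex.single C (.up ℤ) n).obj A ⟶ K,
      HomologicalComplex.homologyMap g n =
        (HomologicalComplex.singleObjHomologySelfIso _ n A).hom ≫ π := by
  obtain ⟨l, hl⟩ : ∃ l, l ≫ K.homologyπ n = π :=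
    ⟨Projective.factorThru π (K.homologyπ n), Projective.factorThru_comp _ _⟩
  refine ⟨HomologicalComplex.mkHomFromSingle (l ≫ K.iCycles n) (by simp), ?_⟩
  rw [← cancel_epi (HomologicalComplex.homologyπ _ _), HomologicalComplex.homologyπ_naturality,
    HomologicalComplex.homologyπ_singleObjHomologySelfIso_hom_assoc, ← hl, ← Category.assoc]
  congr 1
  rw [← cancel_mono (HomologicalComplex.iCycles _ _), HomologicalComplex.cyclesMap_i,
    HomologicalComplex.mkHomFromSingle_f, HomologicalComplex.singleObjCyclesSelfIso_hom]
  simp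

lemma exists_hom_single (K : CochainComplex C ℤ) {W : C} (n : ℤ) [K.IsStrictlyLE n]
    (f : K.homology n ⟶ W) :
    ∃ g : K ⟶ (HomologicalComplex.single C (.up ℤ) n).obj W,
      HomologicalComplex.homologyMap g n ≫
        (HomologicalComplex.singleObjHomologySelfIso _ n W).hom = f := by
  have hd : K.d n (n + 1) = 0 := (K.isZero_of_isStrictlyLE n (n + 1) (by lia)).eq_of_tgt _ _
  have := K.isIso_homologyι n (n + 1) (by simp) hd
  refine ⟨HomologicalComplex.mkHomToSingle (K.pOpcycles n ≫ inv (K.homologyι n) ≫ f) (by simp), ?_⟩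
  rw [← cancel_epi (K.homologyπ n), HomologicalComplex.homologyπ_naturality_assoc,
    HomologicalComplex.homologyπ_singleObjHomologySelfIso_hom,
    HomologicalComplex.singleObjCyclesSelfIso_hom, HomologicalComplex.cyclesMap_i_assoc,
    HomologicalComplex.mkHomToSingle_f]
  simp [← HomologicalComplex.homology_π_ι_assoc]

instance isKProjective_single (n : ℤ) (A : C) [hA : Projective A] :
    CochainComplex.IsKProjective ((HomologicalComplex.single C (.up ℤ) n).obj A) := by
  have (i : ℤ) : Projective (((HomologicalComplex.single C (.up ℤ) n).obj A).X i) := by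
    by_cases hi : i = n
    · exact Projective.of_iso (HomologicalComplex.singleObjXIsoOfEq (.up ℤ) n A i hi).symm hA
    · exact Projective.of_iso (HomologicalComplex.isZero_single_obj_X (.up ℤ) n A i hi).isoZero.symm
        inferInstance
  exact CochainComplex.isKProjective_of_projective _ n

variable [HasDerivedCategory.{w} C]

lemma exists_Q_map_eq {K L : CochainComplex C ℤ} [K.IsKProjective] (g : Q.obj K ⟶ Q.obj L) :
    ∃ f : K ⟶ L, Q.map f = g := by
  obtain ⟨f, hf⟩ := (CochainComplex.IsKProjective.Qh_map_bijective K
    ((HomotopyCategory.quotient _ _).obj L)).surjective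
      ((quotientCompQhIso C).hom.app K ≫ g ≫ (quotientCompQhIso C).inv.app L)
  obtain ⟨f, rfl⟩ := (HomotopyCategory.quotient _ _).map_surjective f
  refine ⟨f, ?_⟩
  rw [← cancel_epi ((quotientCompQhIso C).hom.app K), ← quotientCompQhIso_hom_naturality, hf]
  simp

/-- The homology of the image of a cochain complex in the derived category. -/
noncomputable def homologyQIso (K : CochainComplex C ℤ) (n : ℤ) :
    (homologyFunctor C n).obj (Q.obj K) ≅ K.homology n :=
  (homologyFunctorFactors C n).app K

lemma homologyQIso_hom_naturality {K L : CochainComplex C ℤ} (f : K ⟶ L) (n : ℤ) :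
    (homologyFunctor C n).map (Q.map f) ≫ (homologyQIso L n).hom =
      (homologyQIso K n).hom ≫ HomologicalComplex.homologyMap f n :=
  homologyFunctorFactors_hom_naturality f n

/-- The object `A` placed in cohomological degree `n`, in the derived category. -/
noncomputable abbrev singleObj (n : ℤ) (A : C) : DerivedCategory C :=
  Q.obj ((HomologicalComplex.single C (.up ℤ) n).obj A)

/-- The homology in degree `n` of an object placed in degree `n`. -/
noncomputable def homologySingleIso (n : ℤ) (A : C) :
    (homologyFunctor C n).obj (singleObj n A) ≅ A :=
  homologyQIso _ n ≪≫ HomologicalComplex.singleObjHomologySelfIso _ n A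

lemma homologySingleIso_hom (n : ℤ) (A : C) :
    (homologySingleIso n A).hom = (homologyQIso _ n).hom ≫
      (HomologicalComplex.singleObjHomologySelfIso _ n A).hom :=
  rfl

lemma homologySingleIso_hom_naturality (n : ℤ) {A B : C} (f : A ⟶ B) :
    (homologyFunctor C n).map (Q.map ((HomologicalComplex.single C (.up ℤ) n).map f)) ≫
        (homologySingleIso n B).hom =
      (homologySingleIso n A).hom ≫ f := by
  rw [homologySingleIso_hom, reassoc_of% homologyQIso_hom_naturality, homologySingleIso_hom]
  simp

lemma isZero_homology_single (n i : ℤ) (hi : i ≠ n) (A : C) :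
    IsZero ((homologyFunctor C i).obj (singleObj n A)) :=
  (HomologicalComplex.isZero_single_obj_homology (.up ℤ) n A i hi).of_iso (homologyQIso _ i)

lemma exists_singleObj_hom (X : DerivedCategory C) {A : C} [Projective A] (n : ℤ)
    (π : A ⟶ (homologyFunctor C n).obj X) :
    ∃ g : singleObj n A ⟶ X,
      (homologyFunctor C n).map g = (homologySingleIso n A).hom ≫ π := by
  obtain ⟨K, ⟨e⟩⟩ : ∃ K, Nonempty (Q.obj K ≅ X) := ⟨_, ⟨Q.objObjPreimageIso X⟩⟩
  obtain ⟨g, hg⟩ := exists_single_hom K n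
    (π ≫ (homologyFunctor C n).map e.inv ≫ (homologyQIso K n).hom)
  refine ⟨Q.map g ≫ e.hom, ?_⟩
  rw [← cancel_mono ((homologyFunctor C n).map e.inv), ← cancel_mono (homologyQIso K n).hom,
    ← Functor.map_comp, Category.assoc, e.hom_inv_id, Category.comp_id,
    homologyQIso_hom_naturality, hg, homologySingleIso_hom]
  simp

lemma exists_hom_singleObj (X : DerivedCategory C) {W : C} (n : ℤ) [hX : X.IsLE n]
    (f : (homologyFunctor C n).obj X ⟶ W) :
    ∃ g : X ⟶ singleObj n W,
      (homologyFunctor C n).map g ≫ (homologySingleIso n W).hom = f := by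
  obtain ⟨K, hK, ⟨e⟩⟩ := exists_iso_Q_obj_of_isLE X n
  obtain ⟨g, hg⟩ := exists_hom_single K n
    ((homologyQIso K n).inv ≫ (homologyFunctor C n).map e.inv ≫ f)
  refine ⟨e.hom ≫ Q.map g, ?_⟩
  rw [homologySingleIso_hom, Functor.map_comp, Category.assoc,
    reassoc_of% homologyQIso_hom_naturality, hg]
  simp [← Functor.map_comp_assoc]

lemma singleObj_hom_eq_zero {A W : C} [Projective A] {n j : ℤ}
    (h : singleObj n A ⟶ singleObj j W) (hnj : n ≠ j) : h = 0 := by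
  obtain ⟨h, rfl⟩ := exists_Q_map_eq h
  have : h = 0 := by
    ext
    exact (HomologicalComplex.isZero_single_obj_X (.up ℤ) j W n hnj).eq_of_tgt _ _
  rw [this, Functor.map_zero]

/-- Every morphism from a projective object placed in degree `n` to an object in another single
degree factors through `f`, provided that morphisms from the projective object factor through
the homology of `f` in degree `n`. -/
lemma exists_fac_singleObj (X : DerivedCategory C) (n : ℤ) [X.IsLE n] {A W : C} [Projective A]
    (f : singleObj n A ⟶ X) {π : A ⟶ (homologyFunctor C n).obj X}
    (hf : (homologyFunctor C n).map f = (homologySingleIso n A).hom ≫ π)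
    (hπ : ∀ g : A ⟶ W, ∃ g', π ≫ g' = g) (j : ℤ) (h : singleObj n A ⟶ singleObj j W) :
    ∃ h' : X ⟶ singleObj j W, f ≫ h' = h := by
  by_cases hnj : n = j
  · subst hnj
    obtain ⟨h, rfl⟩ := exists_Q_map_eq h
    obtain ⟨h, rfl⟩ := (HomologicalComplex.single C (.up ℤ) n).map_surjective h
    obtain ⟨g', hg'⟩ := hπ h
    obtain ⟨k, hk⟩ := exists_hom_singleObj X n g'
    refine ⟨k, ?_⟩
    obtain ⟨l, hl⟩ := exists_Q_map_eq (f ≫ k)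
    obtain ⟨l, rfl⟩ := (HomologicalComplex.single C (.up ℤ) n).map_surjective l
    rw [← hl]
    congr 2
    rw [← cancel_epi (homologySingleIso n A).hom, ← homologySingleIso_hom_naturality, hl,
      Functor.map_comp, Category.assoc, hk, hf, Category.assoc, hg']
  · exact ⟨0, by rw [comp_zero, singleObj_hom_eq_zero h hnj]⟩

end Single

section Perfect

universe w

variable {R}

/-- Bounded complexes of finitely generated projective modules. -/
structure IsStrictlyPerfect (F : CochainComplex (ModuleCat R) ℤ) : Prop where
  bounded : ∃ a b : ℤ, ∀ i : ℤ, (i < a ∨ b < i) → IsZero (F.X i)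
  finite_projective : ∀ i : ℤ, Module.Finite R (F.X i) ∧ Module.Projective R (F.X i)

lemma isKProjective_of_bounded_above (F : CochainComplex (ModuleCat R) ℤ)
    (hb : ∃ b : ℤ, ∀ i : ℤ, b < i → IsZero (F.X i)) (hF : ∀ i, Module.Projective R (F.X i)) :
    F.IsKProjective := by
  obtain ⟨b, hb⟩ := hb
  have : F.IsStrictlyLE b := (CochainComplex.isStrictlyLE_iff _ _).2 hb
  have (i : ℤ) : Projective (F.X i) := IsProjective.iff_projective (F.X i) |>.1 (hF i)
  exact CochainComplex.isKProjective_of_projective _ b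

lemma IsStrictlyPerfect.isKProjective {F : CochainComplex (ModuleCat R) ℤ}
    (hF : IsStrictlyPerfect F) : F.IsKProjective := by
  obtain ⟨_, b, h⟩ := hF.bounded
  exact isKProjective_of_bounded_above F ⟨b, fun i hi ↦ h i (Or.inr hi)⟩
    fun i ↦ (hF.finite_projective i).2

lemma IsStrictlyPerfect.shift {F : CochainComplex (ModuleCat R) ℤ}
    (hF : IsStrictlyPerfect F) (n : ℤ) : IsStrictlyPerfect (F⟦n⟧) where
  bounded := by
    obtain ⟨a, b, h⟩ := hF.bounded
    exact ⟨a - n, b - n, fun i hi ↦ h (i + n) (by lia)⟩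
  finite_projective i := hF.finite_projective (i + n)

lemma IsStrictlyPerfect.mappingCone {F G : CochainComplex (ModuleCat R) ℤ}
    (hF : IsStrictlyPerfect F) (hG : IsStrictlyPerfect G) (f : F ⟶ G) :
    IsStrictlyPerfect (CochainComplex.mappingCone f) := by
  have e (i : ℤ) : (CochainComplex.mappingCone f).X i ≅ F.X (i + 1) ⊞ G.X i :=
    HomologicalComplex.homotopyCofiber.XIsoBiprod f i (i + 1) rfl
  refine ⟨?_, fun i ↦ ?_⟩
  · obtain ⟨a, b, h⟩ := hF.bounded
    obtain ⟨a', b', h'⟩ := hG.bounded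
    refine ⟨min (a - 1) a', max b b', fun i hi ↦ IsZero.of_iso ?_ (e i)⟩
    exact (biprod_isZero_iff _ _).2 ⟨h _ (by lia), h' _ (by lia)⟩
  · have e := (e i ≪≫ ModuleCat.biprodIsoProd _ _).toLinearEquiv.symm
    have := (hF.finite_projective (i + 1)).1
    have := (hF.finite_projective (i + 1)).2
    have := (hG.finite_projective i).1
    have := (hG.finite_projective i).2
    exact ⟨Module.Finite.equiv e, Module.Projective.of_equiv e⟩

lemma isStrictlyPerfect_single (n : ℤ) (A : ModuleCat R) [hA : Module.Finite R A]
    [hA' : Module.Projective R A] :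
    IsStrictlyPerfect ((HomologicalComplex.single _ (.up ℤ) n).obj A) where
  bounded := ⟨n, n, fun i hi ↦ HomologicalComplex.isZero_single_obj_X (.up ℤ) n A i (by lia)⟩
  finite_projective i := by
    by_cases hi : i = n
    · have e := (HomologicalComplex.singleObjXIsoOfEq (.up ℤ) n A i hi).toLinearEquiv.symm
      exact ⟨Module.Finite.equiv e, Module.Projective.of_equiv e⟩
    · have := ModuleCat.subsingleton_of_isZero
        (HomologicalComplex.isZero_single_obj_X (.up ℤ) n A i hi)
      exact ⟨inferInstance, inferInstance⟩

variable [HasDerivedCategory.{w} (ModuleCat R)]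

/-- Perfect objects of the derived category of a ring. -/
def IsPerfectObj (X : DerivedCategory (ModuleCat R)) : Prop :=
  ∃ F : CochainComplex (ModuleCat R) ℤ, IsStrictlyPerfect F ∧ Nonempty (Q.obj F ≅ X)

lemma isPerfectObj_singleObj (n : ℤ) (A : ModuleCat R) [Module.Finite R A]
    [Module.Projective R A] : IsPerfectObj (singleObj n A) :=
  ⟨_, isStrictlyPerfect_single n A, ⟨Iso.refl _⟩⟩

lemma isPerfectObj_of_isZero {X : DerivedCategory (ModuleCat R)} (hX : IsZero X) :
    IsPerfectObj X :=
  ⟨_, isStrictlyPerfect_single 0 (ModuleCat.of R PUnit), ⟨(Q.map_isZero (Functor.map_isZero _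
    (ModuleCat.isZero_of_subsingleton _))).iso hX⟩⟩

lemma IsPerfectObj.shift {X : DerivedCategory (ModuleCat R)} (hX : IsPerfectObj X) (n : ℤ) :
    IsPerfectObj (X⟦n⟧) := by
  obtain ⟨F, hF, ⟨e⟩⟩ := hX
  exact ⟨F⟦n⟧, hF.shift n, ⟨(Q.commShiftIso n).app F ≪≫ (shiftFunctor _ n).mapIso e⟩⟩

open Pretriangulated in
lemma IsPerfectObj.obj₃ {T : Triangle (DerivedCategory (ModuleCat R))} (hT : T ∈ distTriang _)
    (h₁ : IsPerfectObj T.obj₁) (h₂ : IsPerfectObj T.obj₂) : IsPerfectObj T.obj₃ := by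
  obtain ⟨F, hF, ⟨e⟩⟩ := h₁
  obtain ⟨G, hG, ⟨e'⟩⟩ := h₂
  have := hF.isKProjective
  obtain ⟨f, hf⟩ := exists_Q_map_eq (e.hom ≫ T.mor₁ ≫ e'.inv)
  refine ⟨_, hF.mappingCone hG f, ⟨Triangle.π₃.mapIso (isoTriangleOfIso₁₂ _ _
    (mappingCone_triangle_distinguished f) hT e e' ?_)⟩⟩
  change Q.map f ≫ e'.hom = e.hom ≫ T.mor₁
  simp [hf]

open Pretriangulated in
lemma IsPerfectObj.obj₂ {T : Triangle (DerivedCategory (ModuleCat R))} (hT : T ∈ distTriang _)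
    (h₁ : IsPerfectObj T.obj₁) (h₃ : IsPerfectObj T.obj₃) : IsPerfectObj T.obj₂ :=
  IsPerfectObj.obj₃ (inv_rot_of_distTriang _ hT) (h₃.shift (-1)) h₁

lemma isPerfect_iff (M : CochainComplex (ModuleCat R) ℤ) :
    IsPerfect R M ↔ IsPerfectObj (Q.obj M) := by
  constructor
  · rintro ⟨F, f, hf, hb, hF⟩
    exact ⟨F, ⟨hb, hF⟩, ⟨asIso (Q.map f)⟩⟩
  · rintro ⟨F, hF, ⟨e⟩⟩
    have := hF.isKProjective
    obtain ⟨f, hf⟩ := exists_Q_map_eq e.hom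
    refine ⟨F, f, ?_, hF.bounded, hF.finite_projective⟩
    rw [← isIso_Q_map_iff_quasiIso, hf]
    infer_instance

end Perfect

end DerivedCategory

section ResidueField

open IsLocalRing TensorProduct

variable {R} [IsLocalRing R]

lemma exists_surjective_lift_residueField (H : Type) [AddCommGroup H] [Module R H]
    [Module.Finite R H] :
    ∃ (m : ℕ) (π : (Fin m → R) →ₗ[R] H), Function.Surjective π ∧
      ∀ g : (Fin m → R) →ₗ[R] ResidueField R, ∃ g' : H →ₗ[R] ResidueField R, g' ∘ₗ π = g := by
  let b := Module.finBasis (ResidueField R) (ResidueField R ⊗[R] H)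
  choose v hv using fun i ↦
    TensorProduct.mk_surjective R H (ResidueField R) residue_surjective (b i)
  refine ⟨_, Fintype.linearCombination R v, ?_, fun g ↦ ⟨(b.constr (ResidueField R)
    fun i ↦ g (Pi.single i 1)).restrictScalars R ∘ₗ TensorProduct.mk R _ H 1, ?_⟩⟩
  · rw [← LinearMap.range_eq_top, Fintype.range_linearCombination]
    exact span_eq_top_of_tmul_eq_basis v b hv
  · ext i
    have := hv i
    simp_all

lemma exists_ne_zero_residueField (H : Type) [AddCommGroup H] [Module R H]
    [Module.Finite R H] [Nontrivial H] : ∃ g : H →ₗ[R] ResidueField R, g ≠ 0 := by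
  obtain ⟨m, π, hπ, h⟩ := exists_surjective_lift_residueField (R := R) H
  obtain _ | m := m
  · exact absurd (hπ.subsingleton) (not_subsingleton H)
  · obtain ⟨g, hg⟩ := h (Algebra.linearMap R _ ∘ₗ LinearMap.proj 0)
    refine ⟨g, fun h0 ↦ one_ne_zero (α := ResidueField R) ?_⟩
    simpa [h0] using (LinearMap.congr_fun hg 1).symm

end ResidueField

lemma CategoryTheory.ShortComplex.Exact.moduleFinite {R : Type} [CommRing R] [IsNoetherianRing R]
    {S : ShortComplex (ModuleCat R)} (hS : S.Exact) (h₁ : Module.Finite R S.X₁)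
    (h₃ : Module.Finite R S.X₃) : Module.Finite R S.X₂ := by
  have := isNoetherian_of_range_eq_ker S.f.hom S.g.hom
    ((ShortComplex.moduleCat_exact_iff_range_eq_ker S).1 hS)
  infer_instance

namespace DerivedCategory

section Local

universe w v u

open Pretriangulated

section

variable {C : Type u} [Category.{v} C] [Abelian C] [HasDerivedCategory.{w} C]

/-- The shift of an object placed in a single degree. -/
noncomputable def singleObjShiftIso (n : ℤ) (A : C) :
    (singleObj (n + 1) A)⟦(1 : ℤ)⟧ ≅ singleObj n A :=
  ((Q.commShiftIso (1 : ℤ)).app _).symm ≪≫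
    Q.mapIso (((CochainComplex.singleFunctors C).shiftIso 1 n (n + 1) (add_comm _ _)).app A)

lemma isZero_of_forall_isLE (X : DerivedCategory C) (hX : ∀ n, X.IsLE n) : IsZero X := by
  have (n : ℤ) : IsZero ((homologyFunctor C n).obj X) := X.isZero_of_isLE (n - 1) n (by lia)
  have : IsIso (0 : X ⟶ X) := (isIso_iff C _).2 fun n ↦
    ⟨0, (this n).eq_of_src _ _, (this n).eq_of_src _ _⟩
  rw [IsZero.iff_id_eq_zero, ← cancel_mono (0 : X ⟶ X), comp_zero, comp_zero]

/-- If a morphism from a projective object placed in degree `n` to `X` lifts all morphisms to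
shifts of `W`, then its cone receives no more morphisms to shifts of `W` than `X` does. -/
lemma hom_obj₃_eq_zero {T : Triangle (DerivedCategory C)} (hT : T ∈ distTriang _) {W : C} (n : ℤ)
    (h₂ : ∀ g : T.obj₂ ⟶ singleObj n W, g = 0)
    (h₁ : ∀ h : T.obj₁ ⟶ singleObj (n + 1) W, ∃ h', T.mor₁ ≫ h' = h)
    (g : T.obj₃ ⟶ singleObj n W) : g = 0 := by
  obtain ⟨h, rfl⟩ := T.yoneda_exact₃ hT g (h₂ _)
  obtain ⟨h', hh'⟩ := (shiftFunctor (DerivedCategory C) (1 : ℤ)).map_surjective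
    (h ≫ (singleObjShiftIso n W).inv)
  obtain ⟨h'', rfl⟩ := h₁ h'
  rw [← cancel_mono (singleObjShiftIso n W).inv, Category.assoc, ← hh', Functor.map_comp,
    zero_comp]
  exact comp_distTriang_mor_zero₃₁_assoc _ hT _ |>.trans zero_comp

end

variable {R} [IsLocalRing R] [HasDerivedCategory.{w} (ModuleCat R)]

lemma exists_hom_singleObj_residueField_ne_zero (X : DerivedCategory (ModuleCat R)) (n : ℤ)
    [X.IsLE n] (hfin : Module.Finite R ((homologyFunctor (ModuleCat R) n).obj X))
    (hX : ¬ IsZero ((homologyFunctor (ModuleCat R) n).obj X)) :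
    ∃ g : X ⟶ singleObj n (ModuleCat.of R (IsLocalRing.ResidueField R)),
      (homologyFunctor (ModuleCat R) n).map g ≠ 0 := by
  have : Nontrivial ((homologyFunctor (ModuleCat R) n).obj X) :=
    not_subsingleton_iff_nontrivial.1 fun _ ↦ hX (ModuleCat.isZero_of_subsingleton _)
  obtain ⟨f, hf⟩ := exists_ne_zero_residueField (R := R) ((homologyFunctor (ModuleCat R) n).obj X)
  obtain ⟨g, hg⟩ := exists_hom_singleObj X n (ModuleCat.ofHom f)
  refine ⟨g, fun h ↦ hf ?_⟩
  rw [h, zero_comp] at hg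
  exact congr_arg ModuleCat.Hom.hom hg.symm

lemma isZero_of_hom_residueField_eq_zero (X : DerivedCategory (ModuleCat R)) (n₀ : ℤ)
    [hX : X.IsLE n₀] (hfin : ∀ i, Module.Finite R ((homologyFunctor (ModuleCat R) i).obj X))
    (h : ∀ n ≤ n₀, ∀ g : X ⟶ singleObj n (ModuleCat.of R (IsLocalRing.ResidueField R)), g = 0) :
    IsZero X := by
  have key (m : ℕ) : X.IsLE (n₀ - m) := by
    induction m with
    | zero => simpa using hX
    | succ m ih =>
      rw [isLE_iff]
      intro i hi
      obtain hi | rfl : n₀ - m < i ∨ i = n₀ - m := by push_cast at hi; lia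
      · exact X.isZero_of_isLE _ i hi
      · by_contra h0
        obtain ⟨g, hg⟩ := exists_hom_singleObj_residueField_ne_zero X _ (hfin _) h0
        exact hg (by rw [h _ (by lia) g, Functor.map_zero])
  refine isZero_of_forall_isLE X fun n ↦ ?_
  rw [isLE_iff]
  intro i hi
  have := key (n₀ - n).toNat
  exact X.isZero_of_isLE (n₀ - (n₀ - n).toNat) i (by lia)

variable [IsNoetherianRing R]

/-- An object of the derived category of a noetherian local ring, with bounded above and
finitely generated cohomology, is perfect as soon as it has no non zero morphism to the
residue field placed in small enough degrees. -/
theorem isPerfectObj_of_hom_residueField_eq_zero (X : DerivedCategory (ModuleCat R)) (n₀ : ℤ)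
    (N : ℕ) [hX : X.IsLE (n₀ + N)]
    (hfin : ∀ i, Module.Finite R ((homologyFunctor (ModuleCat R) i).obj X))
    (h : ∀ n ≤ n₀, ∀ g : X ⟶ singleObj n (ModuleCat.of R (IsLocalRing.ResidueField R)), g = 0) :
    IsPerfectObj X := by
  induction N generalizing X with
  | zero =>
    have : X.IsLE n₀ := by simpa using hX
    exact isPerfectObj_of_isZero (isZero_of_hom_residueField_eq_zero X n₀ hfin h)
  | succ N ih =>
    set t : ℤ := n₀ + (N + 1 : ℕ) with ht
    obtain ⟨m, π, hπ, hπ'⟩ :=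
      exists_surjective_lift_residueField (R := R) ((homologyFunctor (ModuleCat R) t).obj X)
    let A : ModuleCat R := ModuleCat.of R (Fin m → R)
    have : Projective A := (IsProjective.iff_projective (R := R) (Fin m → R)).1 inferInstance
    obtain ⟨f, hf⟩ := exists_singleObj_hom X (A := A) t (ModuleCat.ofHom π)
    obtain ⟨Y, u, v, hT⟩ := distinguished_cocone_triangle f
    refine IsPerfectObj.obj₂ hT (isPerfectObj_singleObj t A) ?_
    change IsPerfectObj Y
    have hA (i : ℤ) : Module.Finite R ((homologyFunctor (ModuleCat R) i).obj (singleObj t A)) := by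
      by_cases hi : i = t
      · subst hi
        exact Module.Finite.equiv (homologySingleIso t A).symm.toLinearEquiv
      · have := ModuleCat.subsingleton_of_isZero (isZero_homology_single t i hi A)
        infer_instance
    have hY : Y.IsLE (n₀ + N) := by
      rw [isLE_iff]
      intro i hi
      refine (HomologySequence.exact₃ _ hT i (i + 1) rfl).isZero_X₂ ?_ ?_
      · obtain rfl | hi : i = t ∨ t < i := by lia
        · refine (HomologySequence.epi_homologyMap_mor₁_iff _ hT t).1 ?_
          change Epi ((homologyFunctor (ModuleCat R) t).map f)
          have : Epi (ModuleCat.ofHom π) := (ModuleCat.epi_iff_surjective _).2 hπ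
          rw [hf]
          infer_instance
        · exact (X.isZero_of_isLE t i hi).eq_of_src _ _
      · exact (isZero_homology_single t (i + 1) (by lia) A).eq_of_tgt _ _
    refine ih Y (fun i ↦ ?_) fun n hn g ↦ ?_
    · exact (HomologySequence.exact₃ _ hT i (i + 1) rfl).moduleFinite (hfin i) (hA (i + 1))
    · refine hom_obj₃_eq_zero hT n (h n hn) (fun h ↦ ?_) g
      refine exists_fac_singleObj X t f hf (fun g ↦ ?_) _ h
      obtain ⟨g', hg'⟩ := hπ' g.hom
      exact ⟨ModuleCat.ofHom g', ModuleCat.hom_ext hg'⟩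

end Local

universe w v u

variable {C : Type u} [Category.{v} C] [Abelian C] [HasDerivedCategory.{w} C]

lemma Q_map_eq_zero_of_fac {K : CochainComplex C ℤ} {n : ℤ} {W : C}
    (g : K ⟶ (HomologicalComplex.single C (.up ℤ) n).obj W) (s : K.X (n + 1) ⟶ W)
    (hs : K.d n (n + 1) ≫ s = g.f n ≫ (HomologicalComplex.singleObjXSelf (.up ℤ) n W).hom) :
    Q.map g = 0 := by
  let h (i j : ℤ) (hij : (ComplexShape.up ℤ).Rel j i) :
      K.X i ⟶ ((HomologicalComplex.single C (.up ℤ) n).obj W).X j :=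
    if hj : j = n then (K.XIsoOfEq (by rw [← hj]; exact hij.symm)).hom ≫ s ≫
      (HomologicalComplex.singleObjXIsoOfEq (.up ℤ) n W j hj).inv else 0
  have hg : g = Homotopy.nullHomotopicMap' h := by
    apply HomologicalComplex.to_single_hom_ext
    rw [Homotopy.nullHomotopicMap'_f (k₂ := n - 1) (k₁ := n) (k₀ := n + 1) (by simp) (by simp),
      ← cancel_mono (HomologicalComplex.singleObjXSelf (.up ℤ) n W).hom, ← hs]
    simp [h, HomologicalComplex.singleObjXSelf]
  have := HomotopyCategory.eq_of_homotopy _ _ ((Homotopy.ofEq hg).trans (Homotopy.nullHomotopy' h))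
  rw [← cancel_epi ((quotientCompQhIso C).hom.app K), ← quotientCompQhIso_hom_naturality]
  rw [this, Functor.map_zero, Functor.map_zero, zero_comp, comp_zero]

lemma exists_fac_of_Q_map_eq_zero {K : CochainComplex C ℤ} [K.IsKProjective] {n : ℤ} {W : C}
    (g : K ⟶ (HomologicalComplex.single C (.up ℤ) n).obj W) (hg : Q.map g = 0) :
    ∃ s : K.X (n + 1) ⟶ W,
      K.d n (n + 1) ≫ s = g.f n ≫ (HomologicalComplex.singleObjXSelf (.up ℤ) n W).hom := by
  have : (HomotopyCategory.quotient _ _).map g = (HomotopyCategory.quotient _ _).map 0 := by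
    apply (CochainComplex.IsKProjective.Qh_map_bijective K _).injective
    have h := quotientCompQhIso_hom_naturality g
    rw [hg, comp_zero, ← zero_comp (Y := Qh.obj _) (f := _ ), cancel_mono] at h
    exact h.trans (by simp)
  have h := HomotopyCategory.homotopyOfEq _ _ this
  refine ⟨h.hom (n + 1) n ≫ (HomologicalComplex.singleObjXSelf (.up ℤ) n W).hom, ?_⟩
  have := h.comm n
  rw [dNext_eq h.hom (i := n) (i' := n + 1) (by simp),
    prevD_eq h.hom (j := n) (j' := n - 1) (by simp)] at this
  simp [this]

end DerivedCategory

namespace HomologicalComplex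

variable {C : Type*} [Category* C] [MonoidalCategory C] [Preadditive C]
  [(curriedTensor C).Additive] [∀ (X : C), ((curriedTensor C).obj X).Additive]
  (K L : CochainComplex C ℤ) [HasTensor K L]

lemma ιTensorObj_d (i l j j' : ℤ) (h : i + l = j) (h' : j + 1 = j') :
    ιTensorObj K L i l j h ≫ (tensorObj K L).d j j' =
      (K.d i (i + 1) ▷ L.X l) ≫ ιTensorObj K L (i + 1) l j' (by lia) +
        i.negOnePow • ((K.X i ◁ L.d l (l + 1)) ≫ ιTensorObj K L i (l + 1) j' (by lia)) := by
  rw [mapBifunctor.d_eq, Preadditive.comp_add, mapBifunctor.ι_D₁, mapBifunctor.ι_D₂,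
    mapBifunctor.d₁_eq K L (curriedTensor C) (.up ℤ) (i₁ := i) (i₁' := i + 1) rfl l j'
      (show i + 1 + l = j' by lia),
    mapBifunctor.d₂_eq K L (curriedTensor C) (.up ℤ) i (i₂ := l) (i₂' := l + 1) rfl j'
      (show i + (l + 1) = j' by lia)]
  change (1 : ℤˣ) • _ + i.negOnePow • _ = _
  rw [one_smul]
  rfl

lemma whiskerLeft_ιTensorObj_d (n t : ℤ) {U : C} (z : U ⟶ L.X t) (hz : z ≫ L.d t (t + 1) = 0) :
    (K.X n ◁ z) ≫ ιTensorObj K L n t (n + t) rfl ≫ (tensorObj K L).d (n + t) (n + t + 1) =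
      (K.d n (n + 1) ▷ U) ≫ K.X (n + 1) ◁ z ≫ ιTensorObj K L (n + 1) t (n + t + 1) (by lia) := by
  have h0 : K.X n ◁ (0 : U ⟶ L.X (t + 1)) = 0 := ((curriedTensor C).obj (K.X n)).map_zero _ _
  rw [ιTensorObj_d K L n t (n + t) (n + t + 1) rfl rfl, Preadditive.comp_add,
    Linear.comp_units_smul, ← whiskerLeft_comp_assoc, hz, h0, zero_comp, smul_zero, add_zero,
    whisker_exchange_assoc]

variable {K L}

/-- The morphism from a tensor product of complexes induced by morphisms defined on one component
of each factor. -/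
noncomputable def tensorObjDesc {n t : ℤ} {V W : C} (ψ : K.X n ⟶ V) (φ : L.X t ⟶ W) :
    (tensorObj K L).X (n + t) ⟶ V ⊗ W :=
  mapBifunctorDesc fun i j (h : i + j = n + t) ↦ if hi : i = n then
    ((K.XIsoOfEq hi).hom ≫ ψ) ⊗ₘ ((L.XIsoOfEq (by lia)).hom ≫ φ) else 0

lemma ι_tensorObjDesc {n t : ℤ} {V W : C} (ψ : K.X n ⟶ V) (φ : L.X t ⟶ W) :
    ιTensorObj K L n t (n + t) rfl ≫ tensorObjDesc ψ φ = ψ ⊗ₘ φ := by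
  simp [tensorObjDesc]

lemma ι_tensorObjDesc_eq_zero {n t : ℤ} {V W : C} (ψ : K.X n ⟶ V) (φ : L.X t ⟶ W) (i l : ℤ)
    (h : i + l = n + t) (hi : i ≠ n) :
    ιTensorObj K L i l (n + t) h ≫ tensorObjDesc ψ φ = 0 := by
  simp [tensorObjDesc, hi]

lemma whiskerRight_ι_tensorObjDesc {n t : ℤ} {V W : C} (ψ : K.X n ⟶ V) (φ : L.X t ⟶ W)
    (hψ : ∀ i, K.d i n ≫ ψ = 0) (i i' l : ℤ) (h : i' + l = n + t) :
    (K.d i i' ▷ L.X l) ≫ ιTensorObj K L i' l (n + t) h ≫ tensorObjDesc ψ φ = 0 := by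
  by_cases hi : i' = n
  · obtain rfl : l = t := by lia
    subst hi
    have h0 : (0 : K.X i ⟶ V) ▷ L.X l = 0 :=
      congr_app ((curriedTensor C).map_zero _ _) _
    rw [ι_tensorObjDesc, MonoidalCategory.tensorHom_def, ← comp_whiskerRight_assoc, hψ, h0,
      zero_comp]
  · rw [ι_tensorObjDesc_eq_zero ψ φ i' l h hi, comp_zero]

lemma whiskerLeft_ι_tensorObjDesc {n t : ℤ} {V W : C} (ψ : K.X n ⟶ V) (φ : L.X t ⟶ W)
    (hφ : ∀ i, L.d i t ≫ φ = 0) (i l l' : ℤ) (h : i + l' = n + t) :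
    (K.X i ◁ L.d l l') ≫ ιTensorObj K L i l' (n + t) h ≫ tensorObjDesc ψ φ = 0 := by
  by_cases hi : i = n
  · obtain rfl : l' = t := by lia
    subst hi
    have h0 : K.X i ◁ (0 : L.X l ⟶ W) = 0 := ((curriedTensor C).obj (K.X i)).map_zero _ _
    rw [ι_tensorObjDesc, MonoidalCategory.tensorHom_def', ← MonoidalCategory.whiskerLeft_comp_assoc,
      hφ, h0, zero_comp]
  · rw [ι_tensorObjDesc_eq_zero ψ φ i l' h hi, comp_zero]

lemma d_tensorObjDesc {n t : ℤ} {V W : C} (ψ : K.X n ⟶ V) (φ : L.X t ⟶ W)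
    (hψ : ∀ i, K.d i n ≫ ψ = 0) (hφ : ∀ i, L.d i t ≫ φ = 0) (j : ℤ) :
    (tensorObj K L).d j (n + t) ≫ tensorObjDesc ψ φ = 0 := by
  by_cases hj : j + 1 = n + t
  · refine mapBifunctor.hom_ext fun i l (h : i + l = j) ↦ ?_
    change ιTensorObj K L i l j h ≫ _ ≫ _ = _
    rw [← Category.assoc, ιTensorObj_d K L i l j (n + t) h hj, Preadditive.add_comp,
      Linear.units_smul_comp, Category.assoc, Category.assoc,
      whiskerRight_ι_tensorObjDesc ψ φ hψ, whiskerLeft_ι_tensorObjDesc ψ φ hφ]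
    simp
  · rw [HomologicalComplex.shape _ _ _ hj, zero_comp]

end HomologicalComplex

section TensorPerfect

universe w

open HomologicalComplex DerivedCategory

variable {R}

lemma isZero_tensorObj_X (K L : CochainComplex (ModuleCat R) ℤ) (a b : ℤ)
    (hK : ∀ i, a < i → IsZero (K.X i)) (hL : ∀ i, b < i → IsZero (L.X i)) (n : ℤ)
    (hn : a + b < n) : IsZero ((HomologicalComplex.tensorObj K L).X n) := by
  rw [IsZero.iff_id_eq_zero]
  refine mapBifunctor.hom_ext fun i j (h : i + j = n) ↦ IsZero.eq_of_src ?_ _ _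
  by_cases hi : a < i
  · exact Functor.map_isZero (tensorRight (L.X j)) (hK i hi)
  · exact Functor.map_isZero (tensorLeft (K.X i)) (hL j (by lia))

lemma projective_tensorObj_X (K L : CochainComplex (ModuleCat R) ℤ)
    (hK : ∀ i, Module.Projective R (K.X i)) (hL : ∀ i, Module.Projective R (L.X i)) (n : ℤ) :
    Module.Projective R ((HomologicalComplex.tensorObj K L).X n) := by
  have (i j : ℤ) : Projective (((curriedTensor (ModuleCat R)).obj (K.X i)).obj (L.X j)) :=
    (IsProjective.iff_projective (R := R) (TensorProduct R (K.X i) (L.X j))).1 inferInstance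
  refine (IsProjective.iff_projective _).2 ⟨fun f e _ ↦ ?_⟩
  exact ⟨mapBifunctorDesc fun i j h ↦
    Projective.factorThru (ιMapBifunctor K L (curriedTensor _) (.up ℤ) i j n h ≫ f) e,
    mapBifunctor.hom_ext fun i j h ↦ by rw [ι_mapBifunctorDesc_assoc, Projective.factorThru_comp]⟩

lemma isKProjective_tensorObj (K L : CochainComplex (ModuleCat R) ℤ)
    (hK : ∃ b : ℤ, ∀ i, b < i → IsZero (K.X i)) (hK' : ∀ i, Module.Projective R (K.X i))
    (hL : ∃ b : ℤ, ∀ i, b < i → IsZero (L.X i)) (hL' : ∀ i, Module.Projective R (L.X i)) :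
    CochainComplex.IsKProjective (HomologicalComplex.tensorObj K L) := by
  obtain ⟨a, ha⟩ := hK
  obtain ⟨b, hb⟩ := hL
  exact isKProjective_of_bounded_above _ ⟨a + b, isZero_tensorObj_X K L a b ha hb⟩
    (projective_tensorObj_X K L hK' hL')

lemma moduleFinite_homology [IsNoetherianRing R] (K : CochainComplex (ModuleCat R) ℤ)
    (hK : ∀ i, Module.Finite R (K.X i)) (n : ℤ) : Module.Finite R (K.homology n) := by
  have := Module.Finite.of_injective (K.iCycles n).hom
    ((ModuleCat.mono_iff_injective _).1 inferInstance)
  exact Module.Finite.of_surjective (K.homologyπ n).hom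
    ((ModuleCat.epi_iff_surjective _).1 inferInstance)

lemma Q_map_eq_zero_of_isPerfect [HasDerivedCategory.{w} (ModuleCat R)]
    {T : CochainComplex (ModuleCat R) ℤ} (hT : IsPerfect R T) :
    ∃ a : ℤ, ∀ n < a, ∀ (W : ModuleCat R) (g : T ⟶ (single _ (.up ℤ) n).obj W), Q.map g = 0 := by
  obtain ⟨F, f, hf, ⟨a, b, hF⟩, -⟩ := hT
  refine ⟨a, fun n hn W g ↦ ?_⟩
  have h0 : f ≫ g = 0 := by
    apply to_single_hom_ext
    exact (hF n (Or.inl hn)).eq_of_src _ _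
  rw [← cancel_epi (Q.map f), ← Functor.map_comp, h0, Functor.map_zero, comp_zero]

/-- If the tensor product of `K` and `L` is perfect and some cocycle of `L` is mapped to `1`
by a morphism from `L` to a shift of `A`, then morphisms from `K` to small enough degrees
of `A` vanish. -/
lemma hom_eq_zero_of_isPerfect_tensorObj [HasDerivedCategory.{w} (ModuleCat R)]
    (K L : CochainComplex (ModuleCat R) ℤ) [K.IsKProjective]
    [CochainComplex.IsKProjective (HomologicalComplex.tensorObj K L)]
    (hKL : IsPerfect R (HomologicalComplex.tensorObj K L))
    (A : Type) [CommRing A] [Algebra R A] (t : ℤ) (φ : L.X t ⟶ ModuleCat.of R A)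
    (hφ : ∀ i, L.d i t ≫ φ = 0) (z : 𝟙_ (ModuleCat R) ⟶ L.X t) (hz : z ≫ L.d t (t + 1) = 0)
    (hzφ : φ.hom (z.hom (1 : R)) = (1 : A)) :
    ∃ a : ℤ, ∀ n < a, ∀ g : Q.obj K ⟶ singleObj n (ModuleCat.of R A), g = 0 := by
  obtain ⟨a, ha⟩ := Q_map_eq_zero_of_isPerfect hKL
  refine ⟨a - t, fun n hn g ↦ ?_⟩
  obtain ⟨g, rfl⟩ := exists_Q_map_eq g
  let ψ : K.X n ⟶ ModuleCat.of R A := g.f n ≫ (singleObjXSelf (.up ℤ) n _).hom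
  have hψ (i : ℤ) : K.d i n ≫ ψ = 0 := by
    rw [← Category.assoc, ← g.comm, single_obj_d, comp_zero, zero_comp]
  let μ : ModuleCat.of R A ⊗ ModuleCat.of R A ⟶ ModuleCat.of R A :=
    ModuleCat.ofHom (LinearMap.mul' R A)
  let G : HomologicalComplex.tensorObj K L ⟶ (single _ (.up ℤ) (n + t)).obj (ModuleCat.of R A) :=
    mkHomToSingle (tensorObjDesc ψ φ ≫ μ) fun i _ ↦ by
      rw [← Category.assoc, d_tensorObjDesc ψ φ hψ hφ, zero_comp]
  obtain ⟨s, hs⟩ := exists_fac_of_Q_map_eq_zero G (ha (n + t) (by lia) _ G)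
  refine Q_map_eq_zero_of_fac g ((ρ_ (K.X (n + 1))).inv ≫ (K.X (n + 1) ◁ z) ≫
    ιTensorObj K L (n + 1) t (n + t + 1) (by lia) ≫ s) ?_
  have hs' : (HomologicalComplex.tensorObj K L).d (n + t) (n + t + 1) ≫ s =
      tensorObjDesc ψ φ ≫ μ := by
    rw [hs, mkHomToSingle_f]
    simp
  rw [rightUnitor_inv_naturality_assoc, ← reassoc_of% whiskerLeft_ιTensorObj_d K L n t z hz, hs',
    reassoc_of% ι_tensorObjDesc]
  change _ = ψ
  ext x
  change ψ.hom x * φ.hom (z.hom (1 : R)) = ψ.hom x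
  rw [hzφ, mul_one]

end TensorPerfect

section LocalTensor

universe w

open HomologicalComplex DerivedCategory IsLocalRing

variable {R}

lemma moduleFinite_of_iso {A B : ModuleCat R} (e : A ≅ B) (hA : Module.Finite R A) :
    Module.Finite R B :=
  Module.Finite.equiv e.toLinearEquiv

lemma isLE_Q_obj [HasDerivedCategory.{w} (ModuleCat R)] {K : CochainComplex (ModuleCat R) ℤ}
    {n : ℤ} (hK : ∀ i, n < i → IsZero (K.X i)) : (Q.obj K).IsLE n :=
  (isLE_iff _ _).2 fun i hi ↦ IsZero.of_iso
    ((exactAt_iff_isZero_homology K i).1 (ShortComplex.exact_of_isZero_X₂ _ (hK i hi)))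
    (homologyQIso K i)

lemma moduleFinite_homologyFunctor_obj [HasDerivedCategory.{w} (ModuleCat R)]
    {K : CochainComplex (ModuleCat R) ℤ} (hK : ∀ i, Module.Finite R (K.homology i)) (i : ℤ) :
    Module.Finite R ((homologyFunctor (ModuleCat R) i).obj (Q.obj K)) :=
  moduleFinite_of_iso (homologyQIso K i).symm (hK i)

lemma IsPerfect.moduleFinite_homology [IsNoetherianRing R] {K : CochainComplex (ModuleCat R) ℤ}
    (hK : IsPerfect R K) (i : ℤ) : Module.Finite R (K.homology i) := by
  obtain ⟨F, f, hf, -, hF⟩ := hK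
  exact moduleFinite_of_iso (asIso (homologyMap f i))
    (_root_.moduleFinite_homology F (fun j ↦ (hF j).1) i)

/-- A bounded above K-projective complex with nonzero finitely generated homology over a local
ring has a cocycle and a morphism to a shift of the residue field that sends this cocycle
to `1`. -/
lemma exists_hom_residueField_apply_eq_one [IsLocalRing R]
    (L : CochainComplex (ModuleCat R) ℤ) [L.IsKProjective]
    (hL : ∃ b : ℤ, ∀ i, b < i → IsZero (L.X i))
    (hfin : ∀ i, Module.Finite R (L.homology i)) (h0 : ¬ ∀ i, IsZero (L.homology i)) :
    ∃ (t : ℤ) (φ : L.X t ⟶ ModuleCat.of R (ResidueField R)) (z : 𝟙_ (ModuleCat R) ⟶ L.X t),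
      (∀ i, L.d i t ≫ φ = 0) ∧ z ≫ L.d t (t + 1) = 0 ∧
        φ.hom (z.hom (1 : R)) = (1 : ResidueField R) := by
  let := HasDerivedCategory.standard (ModuleCat R)
  obtain ⟨b, hb⟩ := hL
  have hbH (i : ℤ) (hi : ¬ IsZero (L.homology i)) : i ≤ b := by
    by_contra! hbi
    exact hi ((exactAt_iff_isZero_homology L i).1 (ShortComplex.exact_of_isZero_X₂ _ (hb i hbi)))
  obtain ⟨t, ht, htmax⟩ := Int.exists_greatest_of_bdd (P := fun i ↦ ¬ IsZero (L.homology i))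
    ⟨b, hbH⟩ (not_forall.1 h0)
  have : (Q.obj L).IsLE t := (isLE_iff _ _).2 fun i hi ↦ IsZero.of_iso
    (by by_contra h; exact absurd (htmax i h) (by lia)) (homologyQIso L i)
  obtain ⟨g, hg⟩ := exists_hom_singleObj_residueField_ne_zero (Q.obj L) t
    (moduleFinite_homologyFunctor_obj hfin t) fun h ↦ ht (h.of_iso (homologyQIso L t).symm)
  obtain ⟨g, rfl⟩ := exists_Q_map_eq g
  let φ : L.X t ⟶ ModuleCat.of R (ResidueField R) := g.f t ≫ (singleObjXSelf (.up ℤ) t _).hom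
  obtain ⟨y, hy⟩ : ∃ y, φ.hom ((L.iCycles t).hom y) ≠ (0 : ResidueField R) := by
    by_contra! hy
    have h1 : L.iCycles t ≫ φ = 0 := by
      ext y
      exact hy y
    have h2 : L.iCycles t ≫ g.f t = 0 := by
      rw [← cancel_mono (singleObjXSelf (.up ℤ) t _).hom, Category.assoc]
      exact h1.trans zero_comp.symm
    have h3 : cyclesMap g t = 0 := by
      rw [← cancel_mono (iCycles _ t), cyclesMap_i, h2, zero_comp]
    have h4 : homologyMap g t = 0 := by
      rw [← cancel_epi (L.homologyπ t), homologyπ_naturality, h3, zero_comp, comp_zero]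
    apply hg
    rw [← cancel_mono (homologyQIso _ t).hom, homologyQIso_hom_naturality, h4, comp_zero,
      zero_comp]
  obtain ⟨c, hc⟩ := residue_surjective (R := R) (φ.hom ((L.iCycles t).hom y) : ResidueField R)⁻¹
  refine ⟨t, φ, ModuleCat.ofHom (LinearMap.toSpanSingleton R _ (c • (L.iCycles t).hom y)),
    fun i ↦ ?_, ?_, ?_⟩
  · rw [← Category.assoc, ← g.comm, single_obj_d, comp_zero, zero_comp]
  · have h := L.iCycles_d t (t + 1)
    ext
    change (L.d t (t + 1)).hom ((1 : R) • c • (L.iCycles t).hom y) = 0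
    rw [map_smul, map_smul, ← ConcreteCategory.comp_apply, h]
    simp
  · change φ.hom ((1 : R) • c • (L.iCycles t).hom y) = (1 : ResidueField R)
    rw [one_smul, map_smul]
    change c • (φ.hom ((L.iCycles t).hom y) : ResidueField R) = 1
    rw [Algebra.smul_def, ResidueField.algebraMap_eq, hc, inv_mul_cancel₀ hy]

end LocalTensor

/-- Over a commutative noetherian local ring `R`: if `M` is a (homologically)
bounded-below complex with finitely generated homology, `N` is a perfect complex which
is nonzero in `D(R)` (i.e. not acyclic), and the derived tensor product `M ⊗^L_R N`
(computed by tensoring projective resolutions) is perfect, then `M` is perfect.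
(Cohomological indexing: homological degree `i` corresponds to cochain degree `-i`,
so "bounded below" means the complex vanishes in large cochain degrees.) -/
theorem stmt0 [IsNoetherianRing R] [IsLocalRing R]
    (M N : CochainComplex (ModuleCat R) ℤ)
    (hMbdd : ∃ n : ℤ, ∀ i : ℤ, n < i → IsZero (M.X i))
    (hMfin : ∀ i : ℤ, Module.Finite R (M.homology i))
    (hNperf : IsPerfect R N)
    (hNnonzero : ¬ ∀ i : ℤ, IsZero (N.homology i))
    (hMN : ∃ (P Q : CochainComplex (ModuleCat R) ℤ) (p : P ⟶ M) (q : Q ⟶ N),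
      IsProjRes R p ∧ IsProjRes R q ∧ IsPerfect R (HomologicalComplex.tensorObj P Q)) :
    IsPerfect R M := by
  let := HasDerivedCategory.standard (ModuleCat R)
  obtain ⟨P, L, p, q, ⟨hp, hPb, hP⟩, ⟨hq, hLb, hL⟩, hPL⟩ := hMN
  have := DerivedCategory.isKProjective_of_bounded_above P hPb hP
  have := DerivedCategory.isKProjective_of_bounded_above L hLb hL
  have := isKProjective_tensorObj P L hPb hP hLb hL
  have e (i : ℤ) : L.homology i ≅ N.homology i := asIso (HomologicalComplex.homologyMap q i)
  obtain ⟨t, φ, z, hφ, hz, hzφ⟩ := exists_hom_residueField_apply_eq_one L hLb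
    (fun i ↦ moduleFinite_of_iso (e i).symm (hNperf.moduleFinite_homology i))
    fun h ↦ hNnonzero fun i ↦ (h i).of_iso (e i).symm
  obtain ⟨a, ha⟩ := hom_eq_zero_of_isPerfect_tensorObj P L hPL _ t φ hφ z hz hzφ
  obtain ⟨m, hm⟩ := hMbdd
  have : (DerivedCategory.Q.obj M).IsLE (a - 1 + (m - (a - 1)).toNat) :=
    isLE_Q_obj fun i hi ↦ hm i (by lia)
  refine (DerivedCategory.isPerfect_iff M).2
    (DerivedCategory.isPerfectObj_of_hom_residueField_eq_zero _ (a - 1) (m - (a - 1)).toNat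
      (moduleFinite_homologyFunctor_obj hMfin) fun n hn g ↦ ?_)
  rw [← cancel_epi (DerivedCategory.Q.map p), ha n (by lia) (DerivedCategory.Q.map p ≫ g),
    comp_zero]
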